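/- For general points: ℓ(L(10, 2, 6^3)) = 2 while v(L(10, 2, 6^3)) = −1, and ℓ(L(24, 16, 6^9)) = 0 while v(L(24, 16, 6^9)) = −1; in particular both systems are special. -/

import Mathlib

open MvPolynomial

/-- The iterated partial derivative corresponding to the multi-index `ν`. -/
noncomputable def mderiv (ν : Fin 3 → ℕ) :
    MvPolynomial (Fin 3) ℂ →ₗ[ℂ] MvPolynomial (Fin 3) ℂ :=
  ((pderiv (R := ℂ) (0 : Fin 3)).toLinearMap ^ ν 0) ∘ₗ
  ((pderiv (R := ℂ) (1 : Fin 3)).toLinearMap ^ ν 1) ∘ₗ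
  ((pderiv (R := ℂ) (2 : Fin 3)).toLinearMap ^ ν 2)

/-- The linear system `L(d; m)` of homogeneous forms of degree `d` in three variables
all of whose partial derivatives of order `< m i` vanish at the point `p i`,
i.e. plane curves of degree `d` with multiplicity at least `m i` at `p i`. -/
noncomputable def linSys {k : ℕ} (p : Fin k → Fin 3 → ℂ) (d : ℕ) (m : Fin k → ℕ) :
    Submodule ℂ (MvPolynomial (Fin 3) ℂ) :=
  (homogeneousSubmodule (Fin 3) ℂ d) ⊓
    ⨅ (i : Fin k), ⨅ (ν : Fin 3 → ℕ), ⨅ (_ : ν 0 + ν 1 + ν 2 < m i),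
      LinearMap.ker ((aeval (p i)).toLinearMap ∘ₗ mderiv ν)

/-- The projective dimension `ℓ` of the linear system (`-1` means empty). -/
noncomputable def projDim {k : ℕ} (p : Fin k → Fin 3 → ℂ) (d : ℕ) (m : Fin k → ℕ) : ℤ :=
  (Module.finrank ℂ (linSys p d m) : ℤ) - 1

/-- The virtual dimension `v = d(d+3)/2 - ∑ mᵢ(mᵢ+1)/2`. -/
def virtDim {k : ℕ} (d : ℕ) (m : Fin k → ℕ) : ℤ :=
  ((d : ℤ) * (d + 3)) / 2 - ∑ i : Fin k, ((m i : ℤ) * (m i + 1)) / 2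

/-- The quasi-homogeneous multiplicity vector `(m₀, 6, …, 6)` on `n + 1` points. -/
def qh (n m0 : ℕ) : Fin (n + 1) → ℕ := fun i => if i = 0 then m0 else 6

/-- A property `Q` of configurations of `k` points of `ℙ²` (given by nonzero homogeneous
coordinate vectors) holds for points in general position: there is a nonzero polynomial
in the coordinates such that `Q` holds whenever it does not vanish. -/
def Generically (k : ℕ) (Q : (Fin k → Fin 3 → ℂ) → Prop) : Prop :=
  ∃ P : MvPolynomial (Fin k × Fin 3) ℂ, P ≠ 0 ∧
    ∀ p : Fin k → Fin 3 → ℂ, (∀ i, p i ≠ 0) →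
      eval (fun x => p x.1 x.2) P ≠ 0 → Q p

/-!
For points in general position, the dimension of a linear system `L(d; m)` is invariant under
quadratic Cremona transformations. When three of the points are the coordinate points, multiplicity
at least `m t` at the `t`-th of them means degree at most `d - m t` in the `t`-th variable, so that
substituting `x ↦ x⁻¹` and clearing denominators identifies `L(d; m)` with a linear system of degree
`2 d - m 0 - m 1 - m 2`. If the multiplicity of the latter at a coordinate point comes out negative,
a line through two base points is a fixed component of `L(d; m)`, and replacing the multiplicity by
`0` removes it.

One such transformation turns `L(10, 2, 6^3)` into `L(2, 2)`, the pairs of lines through a point,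
and six of them turn `L(24, 16, 6^9)` into `L(2, 2, 2)`, the double line through two points (whose
transform in degree `24` is twice the `(-1)`-curve in `L(12, 8, 3^9)`). These last systems are
spanned by monomials, which can be counted.
-/

open scoped Matrix

section VanishesTo

variable {σ R : Type*}

theorem pderiv_pderiv_comm [CommSemiring R] (i j : σ) (f : MvPolynomial σ R) :
    pderiv i (pderiv j f) = pderiv j (pderiv i f) := by
  classical
  rcases eq_or_ne i j with rfl | hij
  · rfl
  · ext a
    simp only [coeff_pderiv, Finsupp.add_apply, Finsupp.single_apply, if_neg hij, if_neg hij.symm,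
      add_zero, add_right_comm a, mul_right_comm]

theorem pderiv_bind₁ [CommSemiring R] {τ : Type*} [Fintype σ] (g : σ → MvPolynomial τ R) (i : τ)
    (f : MvPolynomial σ R) :
    pderiv i (bind₁ g f) = ∑ j, pderiv i (g j) * bind₁ g (pderiv j f) := by
  classical
  induction f using MvPolynomial.induction_on with
  | C r => simp
  | add f₁ f₂ h₁ h₂ => simp only [map_add, h₁, h₂, mul_add, Finset.sum_add_distrib]
  | mul_X f s hf =>
    simp only [map_mul, pderiv_mul, map_add, bind₁_X_right, hf, pderiv_X, mul_add,
      Finset.sum_add_distrib, Finset.sum_mul, mul_assoc]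
    congr 1
    simp [Pi.single_apply, apply_ite, mul_comm]

theorem eval_bind₁_apply [CommSemiring R] {τ : Type*} (φ : σ → MvPolynomial τ R) (q : τ → R)
    (f : MvPolynomial σ R) : eval q (bind₁ φ f) = eval (fun j => eval q (φ j)) f :=
  eval₂Hom_bind₁ _ _ _ _

/-- The polynomial `f` has multiplicity at least `m` at the point `p`: all its iterated partial
derivatives of order `< m` vanish there. The recursion on `m` lets the Leibniz and chain rules
act one derivative at a time. -/
def VanishesTo [CommSemiring R] (p : σ → R) : ℕ → MvPolynomial σ R → Prop
  | 0, _ => True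
  | m + 1, f => eval p f = 0 ∧ ∀ i, VanishesTo p m (pderiv i f)

namespace VanishesTo

section CommSemiring

variable [CommSemiring R] {p : σ → R} {m : ℕ} {f g : MvPolynomial σ R}

theorem of_succ (h : VanishesTo p (m + 1) f) : VanishesTo p m f := by
  induction m generalizing f with
  | zero => trivial
  | succ m ih => exact ⟨h.1, fun i => ih (h.2 i)⟩

theorem add (hf : VanishesTo p m f) (hg : VanishesTo p m g) : VanishesTo p m (f + g) := by
  induction m generalizing f g with
  | zero => trivial
  | succ m ih =>
    refine ⟨by rw [map_add, hf.1, hg.1, add_zero], fun i => ?_⟩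
    rw [map_add]
    exact ih (hf.2 i) (hg.2 i)

theorem mul_left (g : MvPolynomial σ R) (hf : VanishesTo p m f) : VanishesTo p m (g * f) := by
  induction m generalizing f g with
  | zero => trivial
  | succ m ih =>
    refine ⟨by rw [map_mul, hf.1, mul_zero], fun i => ?_⟩
    rw [pderiv_mul]
    exact (ih _ hf.of_succ).add (ih _ (hf.2 i))

theorem zero : VanishesTo p m (0 : MvPolynomial σ R) := by
  induction m with
  | zero => trivial
  | succ m ih => exact ⟨map_zero _, fun i => by rwa [map_zero]⟩

theorem sum {ι : Type*} {s : Finset ι} {F : ι → MvPolynomial σ R}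
    (h : ∀ i ∈ s, VanishesTo p m (F i)) : VanishesTo p m (∑ i ∈ s, F i) :=
  Finset.sum_induction F (VanishesTo p m) (fun _ _ => add) zero h

theorem bind₁_of_eval [Finite σ] {τ : Type*} {q : τ → R} {φ : σ → MvPolynomial τ R}
    (hf : VanishesTo (fun j => eval q (φ j)) m f) : VanishesTo q m (bind₁ φ f) := by
  have := Fintype.ofFinite σ
  induction m generalizing f with
  | zero => trivial
  | succ m ih =>
    refine ⟨(eval_bind₁_apply φ q f).trans hf.1, fun i => ?_⟩
    rw [pderiv_bind₁]
    exact sum fun j _ => (ih (hf.2 j)).mul_left _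

end CommSemiring

theorem of_mul_left [CommRing R] [NoZeroDivisors R] {p : σ → R} {m : ℕ} {u f : MvPolynomial σ R}
    (hu : eval p u ≠ 0) (h : VanishesTo p m (u * f)) : VanishesTo p m f := by
  induction m generalizing f with
  | zero => trivial
  | succ m ih =>
    refine ⟨(mul_eq_zero.1 ((map_mul _ _ _).symm.trans h.1)).resolve_left hu, fun i => ih ?_⟩
    have hderiv : u * pderiv i f = pderiv i (u * f) + (-pderiv i u) * f := by
      rw [pderiv_mul]
      ring
    rw [hderiv]
    exact (h.2 i).add ((ih h.of_succ).mul_left _)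

end VanishesTo

end VanishesTo

section CoordinatePoints

variable {σ R : Type*} [CommSemiring R] {f : MvPolynomial σ R} {d m : ℕ}

theorem eq_single_of_degree_eq {a : σ →₀ ℕ} {t : σ} (ha : a.degree = d)
    (h : ∀ i ≠ t, a i = 0) : a = Finsupp.single t d := by
  have hat : a = Finsupp.single t (a t) :=
    Finsupp.support_subset_singleton.1 fun i hi =>
      Finset.mem_singleton.2 (not_imp_comm.1 (h i) (Finsupp.mem_support_iff.1 hi))
  rw [hat, Finsupp.degree_single] at ha
  rwa [ha] at hat

theorem degree_eq_of_mem_support (hf : f.IsHomogeneous d) {a : σ →₀ ℕ} (ha : a ∈ f.support) :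
    a.degree = d :=
  not_imp_comm.1 hf.coeff_eq_zero (mem_support_iff.1 ha)

theorem eval_single_one_eq_coeff [Finite σ] [DecidableEq σ] (hf : f.IsHomogeneous d) (t : σ) :
    eval (Pi.single t 1) f = f.coeff (Finsupp.single t d) := by
  have := Fintype.ofFinite σ
  rw [eval_eq', Finset.sum_eq_single (Finsupp.single t d)]
  · simp [Pi.single_apply, Finsupp.single_apply, ite_pow]
  · intro a ha hne
    obtain ⟨i, hit, hai⟩ : ∃ i ≠ t, a i ≠ 0 := by
      by_contra! h
      exact hne (eq_single_of_degree_eq (degree_eq_of_mem_support hf ha) h)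
    rw [Finset.prod_eq_zero (Finset.mem_univ i) (by rw [Pi.single_eq_of_ne hit, zero_pow hai]),
      mul_zero]
  · intro h
    rw [notMem_support_iff.1 h, zero_mul]

theorem vanishesTo_single_one_iff [Finite σ] [DecidableEq σ] [NoZeroDivisors R] [CharZero R]
    (hf : f.IsHomogeneous d) (t : σ) :
    VanishesTo (Pi.single t 1) m f ↔ ∀ a ∈ f.support, a t + m ≤ d := by
  induction m generalizing f d with
  | zero =>
    exact iff_of_true trivial fun a ha =>
      (Finsupp.le_degree t a).trans (degree_eq_of_mem_support hf ha).le
  | succ m ih =>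
    simp only [VanishesTo, ih hf.pderiv, eval_single_one_eq_coeff hf]
    constructor
    · rintro ⟨hcoeff, hderiv⟩ a ha
      obtain ⟨i, hit, hai⟩ : ∃ i ≠ t, a i ≠ 0 := by
        by_contra! h
        rw [← eq_single_of_degree_eq (degree_eq_of_mem_support hf ha) h] at hcoeff
        exact mem_support_iff.1 ha hcoeff
      have hadd : a - Finsupp.single i 1 + Finsupp.single i 1 = a :=
        tsub_add_cancel_of_le (Finsupp.single_le_iff.2 (Nat.one_le_iff_ne_zero.2 hai))
      have hmem : a - Finsupp.single i 1 ∈ (pderiv i f).support := by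
        rw [mem_support_iff, coeff_pderiv, hadd]
        exact mul_ne_zero (mem_support_iff.1 ha) (Nat.cast_add_one_ne_zero _)
      have hsub := hderiv i _ hmem
      have hle := Finsupp.le_degree i a
      rw [degree_eq_of_mem_support hf ha] at hle
      rw [Finsupp.tsub_apply, Finsupp.single_eq_of_ne hit.symm, tsub_zero] at hsub
      omega
    · intro h
      refine ⟨?_, fun i a ha => ?_⟩
      · by_contra hcoeff
        have := h _ (mem_support_iff.2 hcoeff)
        rw [Finsupp.single_eq_same] at this
        omega
      · have hmem : a + Finsupp.single i 1 ∈ f.support := by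
          rw [mem_support_iff, coeff_pderiv] at *
          exact left_ne_zero_of_mul ha
        have := h _ hmem
        rw [Finsupp.add_apply] at this
        omega

end CoordinatePoints

section LinearSystems

theorem pderiv_pow_apply_pderiv {σ R : Type*} [CommSemiring R] (i j : σ) (n : ℕ)
    (f : MvPolynomial σ R) :
    ((pderiv (R := R) i).toLinearMap ^ n) (pderiv j f) =
      pderiv j (((pderiv (R := R) i).toLinearMap ^ n) f) := by
  have h : Commute (pderiv (R := R) i).toLinearMap (pderiv j).toLinearMap :=
    LinearMap.ext fun g => pderiv_pderiv_comm i j g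
  exact LinearMap.congr_fun (h.pow_left n).eq f

theorem mderiv_zero (f : MvPolynomial (Fin 3) ℂ) : mderiv 0 f = f := by
  simp [mderiv]

theorem mderiv_add_single (ν : Fin 3 → ℕ) (i : Fin 3) (f : MvPolynomial (Fin 3) ℂ) :
    mderiv (ν + Pi.single i 1) f = mderiv ν (pderiv i f) := by
  fin_cases i <;> simp [mderiv, pow_succ, pderiv_pow_apply_pderiv]

theorem vanishesTo_iff_mderiv {p : Fin 3 → ℂ} {m : ℕ} {f : MvPolynomial (Fin 3) ℂ} :
    VanishesTo p m f ↔ ∀ ν : Fin 3 → ℕ, ν 0 + ν 1 + ν 2 < m → eval p (mderiv ν f) = 0 := by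
  induction m generalizing f with
  | zero => simp [VanishesTo]
  | succ m ih =>
    have order_add_single (ν : Fin 3 → ℕ) (i : Fin 3) :
        (ν + Pi.single i 1 : Fin 3 → ℕ) 0 + (ν + Pi.single i 1 : Fin 3 → ℕ) 1 +
          (ν + Pi.single i 1 : Fin 3 → ℕ) 2 = ν 0 + ν 1 + ν 2 + 1 := by
      fin_cases i <;> simp <;> omega
    simp only [VanishesTo, ih, ← mderiv_add_single]
    constructor
    · rintro ⟨hzero, hderiv⟩ ν hν
      rcases eq_or_ne ν 0 with rfl | hne
      · rwa [mderiv_zero]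
      · obtain ⟨i, hi⟩ := Function.ne_iff.1 hne
        have hle : Pi.single i 1 ≤ ν := by
          intro j
          rcases eq_or_ne j i with rfl | hj
          · simpa only [Pi.single_eq_same] using Nat.one_le_iff_ne_zero.2 hi
          · simp only [Pi.single_eq_of_ne hj, zero_le]
        have hsub : ν - Pi.single i 1 + Pi.single i 1 = ν := tsub_add_cancel_of_le hle
        rw [← hsub] at hν ⊢
        rw [order_add_single] at hν
        exact hderiv i _ (Nat.lt_of_succ_lt_succ hν)
    · intro h
      refine ⟨?_, fun i ν hν => h _ ?_⟩
      · simpa only [mderiv_zero] using h 0 (by simp)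
      · rw [order_add_single]
        exact Nat.succ_lt_succ hν

variable {k : ℕ} {p : Fin k → Fin 3 → ℂ} {d : ℕ} {m : Fin k → ℕ} {f : MvPolynomial (Fin 3) ℂ}

theorem mem_linSys_iff_mderiv :
    f ∈ linSys p d m ↔ f.IsHomogeneous d ∧
      ∀ i ν, ν 0 + ν 1 + ν 2 < m i → eval (p i) (mderiv ν f) = 0 := by
  simp [linSys, Submodule.mem_iInf, aeval_eq_eval]

theorem mem_linSys :
    f ∈ linSys p d m ↔ f.IsHomogeneous d ∧ ∀ i, VanishesTo (p i) (m i) f := by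
  simp only [mem_linSys_iff_mderiv, vanishesTo_iff_mderiv]

theorem linSys_le (p : Fin k → Fin 3 → ℂ) (d : ℕ) (m : Fin k → ℕ) :
    linSys p d m ≤ homogeneousSubmodule (Fin 3) ℂ d :=
  inf_le_left

instance (d : ℕ) : FiniteDimensional ℂ (homogeneousSubmodule (Fin 3) ℂ d) :=
  Module.Finite.iff_fg.2 (homogeneousSubmodule_fg _ _ d)

instance (p : Fin k → Fin 3 → ℂ) (d : ℕ) (m : Fin k → ℕ) : FiniteDimensional ℂ (linSys p d m) :=
  Submodule.finiteDimensional_of_le (linSys_le p d m)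

theorem finrank_linSys_le_of_injOn_of_mapsTo {k' : ℕ} {q : Fin k' → Fin 3 → ℂ} {d' : ℕ}
    {m' : Fin k' → ℕ} (T : MvPolynomial (Fin 3) ℂ →ₗ[ℂ] MvPolynomial (Fin 3) ℂ)
    (hT : Set.InjOn T (linSys p d m)) (hmaps : ∀ f ∈ linSys p d m, T f ∈ linSys q d' m') :
    Module.finrank ℂ (linSys p d m) ≤ Module.finrank ℂ (linSys q d' m') :=
  LinearMap.finrank_le_finrank_of_injective (f := T.restrict hmaps) fun f g hfg =>
    Subtype.ext (hT f.2 g.2 (congrArg Subtype.val hfg))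

end LinearSystems

section LinearChange

variable {k : ℕ} {d : ℕ} {m : Fin k → ℕ}

theorem finrank_linSys_mulVec_le (p : Fin k → Fin 3 → ℂ) {M N : Matrix (Fin 3) (Fin 3) ℂ}
    (hMN : M * N = 1) :
    Module.finrank ℂ (linSys (fun i => M *ᵥ p i) d m) ≤ Module.finrank ℂ (linSys p d m) := by
  refine finrank_linSys_le_of_injOn_of_mapsTo (bind₁ M.toMvPolynomial).toLinearMap ?_
    fun f hf => ?_
  · have hleft : Function.LeftInverse (bind₁ N.toMvPolynomial) (bind₁ M.toMvPolynomial) := by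
      intro f
      rw [bind₁_bind₁]
      simp only [← Matrix.toMvPolynomial_mul, hMN, Matrix.toMvPolynomial_one]
      exact aeval_X_left_apply f
    exact hleft.injective.injOn
  · rw [mem_linSys] at hf ⊢
    refine ⟨?_, fun i => VanishesTo.bind₁_of_eval ?_⟩
    · have := hf.1.aeval M.toMvPolynomial (n := 1) fun i => Matrix.toMvPolynomial_isHomogeneous M i
      simpa using this
    · simpa only [Matrix.toMvPolynomial_eval_eq_apply] using hf.2 i

theorem finrank_linSys_mulVec (p : Fin k → Fin 3 → ℂ) {M : Matrix (Fin 3) (Fin 3) ℂ}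
    (hM : M.det ≠ 0) :
    Module.finrank ℂ (linSys (fun i => M *ᵥ p i) d m) = Module.finrank ℂ (linSys p d m) := by
  have hunit : IsUnit M.det := hM.isUnit
  refine (finrank_linSys_mulVec_le p (M.mul_nonsing_inv hunit)).antisymm ?_
  have hcancel : (fun i => M⁻¹ *ᵥ M *ᵥ p i) = p := by
    funext i
    rw [Matrix.mulVec_mulVec, M.nonsing_inv_mul hunit, Matrix.one_mulVec]
  have hle := finrank_linSys_mulVec_le (d := d) (m := m) (fun i => M *ᵥ p i)
    (M.nonsing_inv_mul hunit)
  rwa [hcancel] at hle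

end LinearChange

section Reflect

variable {σ R : Type*} [CommSemiring R] {f : MvPolynomial σ R} {n : σ →₀ ℕ}

/-- The linear map replacing each monomial `x ^ a` by `x ^ (n - a)`. Up to the factor `x ^ n` this
is the substitution `x ↦ x⁻¹`, that is, the action of the standard Cremona transformation on forms
whose degree in each variable `t` is at most `n t`; beyond that range the subtraction truncates. -/
noncomputable def reflect (n : σ →₀ ℕ) : MvPolynomial σ R →ₗ[R] MvPolynomial σ R :=
  (basisMonomials σ R).constr R fun a => monomial (n - a) 1

theorem reflect_monomial (a : σ →₀ ℕ) (r : R) :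
    reflect n (monomial a r) = monomial (n - a) r := by
  have h := (basisMonomials σ R).constr_basis R (fun a => monomial (n - a) (1 : R)) a
  rw [coe_basisMonomials] at h
  rw [← mul_one r, ← smul_eq_mul, ← smul_monomial, reflect, map_smul, h, smul_monomial]

theorem reflect_eq_sum (f : MvPolynomial σ R) :
    reflect n f = ∑ a ∈ f.support, monomial (n - a) (f.coeff a) := by
  conv_lhs => rw [f.as_sum, map_sum]
  simp only [reflect_monomial]

theorem exists_mem_support_of_mem_support_reflect {a : σ →₀ ℕ} (ha : a ∈ (reflect n f).support) :
    ∃ b ∈ f.support, a = n - b := by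
  classical
  rw [reflect_eq_sum] at ha
  obtain ⟨b, hb, hab⟩ := Finset.mem_biUnion.1 (support_sum ha)
  exact ⟨b, hb, Finset.mem_singleton.1 (support_monomial_subset hab)⟩

theorem reflect_reflect (hf : ∀ a ∈ f.support, a ≤ n) : reflect n (reflect n f) = f := by
  conv_rhs => rw [f.as_sum]
  rw [reflect_eq_sum f, map_sum]
  refine Finset.sum_congr rfl fun a ha => ?_
  rw [reflect_monomial, tsub_tsub_cancel_of_le (hf a ha)]

theorem isHomogeneous_reflect {d d' : ℕ} (hf : f.IsHomogeneous d) (hn : d + d' = n.degree)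
    (hsupp : ∀ a ∈ f.support, a ≤ n) : (reflect n f).IsHomogeneous d' := by
  rw [reflect_eq_sum]
  refine IsHomogeneous.sum _ _ _ fun a ha => isHomogeneous_monomial _ ?_
  have h := map_add Finsupp.degree (n - a) a
  rw [tsub_add_cancel_of_le (hsupp a ha), degree_eq_of_mem_support hf ha, ← hn] at h
  omega

theorem monomial_mul_bind₁_eq_pow_mul_reflect {d : ℕ} (hf : f.IsHomogeneous d)
    (hsupp : ∀ a ∈ f.support, a ≤ n) {u : MvPolynomial σ R} {g : σ → MvPolynomial σ R}
    (hg : ∀ j, X j * g j = u) : monomial n 1 * bind₁ g f = u ^ d * reflect n f := by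
  rw [reflect_eq_sum, Finset.mul_sum]
  conv_lhs => rw [f.as_sum, map_sum, Finset.mul_sum]
  refine Finset.sum_congr rfl fun a ha => ?_
  have hpow : u ^ d = monomial a 1 * ∏ j ∈ a.support, g j ^ a j := by
    rw [monomial_eq, C_1, one_mul, Finsupp.prod, ← Finset.prod_mul_distrib,
      ← degree_eq_of_mem_support hf ha, Finsupp.degree_apply, ← Finset.prod_pow_eq_pow_sum]
    simp only [← mul_pow, hg]
  have hsplit : monomial n (1 : R) = monomial (n - a) 1 * monomial a 1 := by
    rw [monomial_mul, tsub_add_cancel_of_le (hsupp a ha), one_mul]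
  rw [bind₁_monomial, hsplit, hpow, ← mul_one (f.coeff a), ← C_mul_monomial, mul_one]
  ring

theorem VanishesTo.reflect {K : Type*} [Field K] [Finite σ] {f : MvPolynomial σ K} {d m : ℕ}
    {q : σ → K} (hq : ∀ j, q j ≠ 0) (hf : f.IsHomogeneous d) (hsupp : ∀ a ∈ f.support, a ≤ n)
    (h : VanishesTo q⁻¹ m f) : VanishesTo q m (reflect n f) := by
  classical
  have := Fintype.ofFinite σ
  let c : K := (∏ i, q i)⁻¹
  let u : MvPolynomial σ K := C c * ∏ i, X i
  let g (j : σ) : MvPolynomial σ K := C c * ∏ i ∈ Finset.univ.erase j, X i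
  have hXg (j : σ) : X j * g j = u := by
    rw [mul_left_comm, Finset.mul_prod_erase _ _ (Finset.mem_univ j)]
  have hu : eval q u = 1 := by
    simp only [u, c, map_mul, eval_C, map_prod, eval_X]
    exact inv_mul_cancel₀ (Finset.prod_ne_zero_iff.2 fun i _ => hq i)
  have hgq : (fun j => eval q (g j)) = q⁻¹ := by
    funext j
    refine eq_inv_of_mul_eq_one_right ?_
    rw [← eval_X (f := q) j, ← map_mul, hXg, hu]
  refine VanishesTo.of_mul_left (u := u ^ d) (by rw [map_pow, hu, one_pow]; exact one_ne_zero) ?_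
  rw [← monomial_mul_bind₁_eq_pow_mul_reflect hf hsupp hXg]
  exact (VanishesTo.bind₁_of_eval (hgq ▸ h)).mul_left _

end Reflect

section Semicontinuity

theorem exists_eval_ne_zero_finrank_ker_le {σ κ K V : Type*} [Field K] [Finite κ] [AddCommGroup V]
    [Module K V] [FiniteDimensional K V] (A : V →ₗ[K] κ → MvPolynomial σ K) (x₀ : σ → K) :
    ∃ P : MvPolynomial σ K, eval x₀ P ≠ 0 ∧ ∀ x, eval x P ≠ 0 →
      Module.finrank K (LinearMap.ker ((aeval x).toLinearMap.compLeft κ ∘ₗ A)) ≤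
        Module.finrank K (LinearMap.ker ((aeval x₀).toLinearMap.compLeft κ ∘ₗ A)) := by
  classical
  have := Fintype.ofFinite κ
  let B (x : σ → K) : V →ₗ[K] κ → K := (aeval x).toLinearMap.compLeft κ ∘ₗ A
  obtain ⟨W, hW⟩ := Submodule.exists_isCompl (LinearMap.ker (B x₀))
  have hinj : LinearMap.ker (B x₀ ∘ₗ W.subtype) = ⊥ := by
    rw [LinearMap.ker_comp, ← Submodule.disjoint_iff_comap_eq_bot]
    exact hW.disjoint.symm
  obtain ⟨L, hL⟩ := LinearMap.exists_leftInverse_of_injective _ hinj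
  let b := Module.finBasis K W
  let N₁ : Matrix (Fin _) κ (MvPolynomial σ K) := (LinearMap.toMatrix (Pi.basisFun K κ) b L).map C
  let N₂ : Matrix κ (Fin _) (MvPolynomial σ K) := Matrix.of fun s j => A (b j) s
  have hN (x : σ → K) : eval x (N₁ * N₂).det = LinearMap.det (L ∘ₗ B x ∘ₗ W.subtype) := by
    rw [← LinearMap.det_toMatrix b, LinearMap.toMatrix_comp b (Pi.basisFun K κ) b, RingHom.map_det]
    congr 1
    ext i j
    simp [N₁, N₂, B, Matrix.mul_apply, LinearMap.toMatrix_apply, aeval_eq_eval]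
  refine ⟨(N₁ * N₂).det, ?_, fun x hx => ?_⟩
  · rw [hN, hL, LinearMap.det_id]
    exact one_ne_zero
  · have hdisj : Disjoint (LinearMap.ker (B x)) W := by
      rw [hN] at hx
      rw [disjoint_comm, Submodule.disjoint_iff_comap_eq_bot, ← LinearMap.ker_comp, eq_bot_iff,
        ← not_ne_iff.1 (mt LinearMap.det_eq_zero_iff_ker_ne_bot.2 hx)]
      exact LinearMap.ker_le_ker_comp _ L
    have hle := Submodule.finrank_add_finrank_le_of_disjoint hdisj
    rw [← Submodule.finrank_add_eq_of_isCompl hW] at hle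
    exact Nat.le_of_add_le_add_right hle

end Semicontinuity

section Generic

namespace Generically

variable {k : ℕ} {Q Q' : (Fin k → Fin 3 → ℂ) → Prop}

theorem mono (h : Generically k Q) (hQ : ∀ p, Q p → Q' p) : Generically k Q' :=
  let ⟨P, hP, hPQ⟩ := h
  ⟨P, hP, fun p hp hpP => hQ p (hPQ p hp hpP)⟩

theorem and (h : Generically k Q) (h' : Generically k Q') : Generically k fun p => Q p ∧ Q' p := by
  obtain ⟨P, hP, hPQ⟩ := h
  obtain ⟨P', hP', hPQ'⟩ := h'
  refine ⟨P * P', mul_ne_zero hP hP', fun p hp hpP => ?_⟩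
  rw [map_mul] at hpP
  exact ⟨hPQ p hp (left_ne_zero_of_mul hpP), hPQ' p hp (right_ne_zero_of_mul hpP)⟩

theorem forall_finite {ι : Type*} [Finite ι] {Q : ι → (Fin k → Fin 3 → ℂ) → Prop}
    (h : ∀ i, Generically k (Q i)) : Generically k fun p => ∀ i, Q i p := by
  have := Fintype.ofFinite ι
  choose P hP hPQ using h
  refine ⟨∏ i, P i, Finset.prod_ne_zero_iff.2 fun i _ => hP i, fun p hp hpP i => hPQ i p hp ?_⟩
  rw [map_prod] at hpP
  exact Finset.prod_ne_zero_iff.1 hpP i (Finset.mem_univ i)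

theorem exists_of (h : Generically k Q) : ∃ p, Q p := by
  obtain ⟨P, hP, hPQ⟩ := h
  have hne : P * ∏ i : Fin k, X (i, 0) ≠ 0 :=
    mul_ne_zero hP (Finset.prod_ne_zero_iff.2 fun i _ => X_ne_zero (i, 0))
  obtain ⟨x, hx⟩ : ∃ x, eval x (P * ∏ i : Fin k, X (i, 0)) ≠ 0 := by
    by_contra! h
    exact hne (MvPolynomial.funext fun x => (h x).trans (map_zero _).symm)
  simp only [map_mul, map_prod, eval_X] at hx
  refine ⟨fun i t => x (i, t), hPQ _ (fun i hi => ?_) (left_ne_zero_of_mul hx)⟩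
  exact Finset.prod_ne_zero_iff.1 (right_ne_zero_of_mul hx) i (Finset.mem_univ i)
    (congrFun hi 0)

end Generically

theorem eval_rename_prodMk {ι σ R : Type*} [CommSemiring R] (x : ι → σ → R) (i : ι)
    (f : MvPolynomial σ R) :
    eval (fun t => x t.1 t.2) (rename (Prod.mk i) f) = eval (x i) f := by
  rw [eval_rename]
  rfl

theorem generically_det_ne_zero {k : ℕ} {c : Fin 3 → Fin k} (hc : c.Injective) :
    Generically k fun p => (Matrix.of (p ∘ c)).det ≠ 0 := by
  refine ⟨rename (Prod.map c id) (Matrix.mvPolynomialX (Fin 3) (Fin 3) ℂ).det, ?_,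
    fun p _ hp => ?_⟩
  · rw [Ne, map_eq_zero_iff _ (rename_injective _ (hc.prodMap Function.injective_id))]
    exact Matrix.det_mvPolynomialX_ne_zero _ _
  · rw [eval_rename, RingHom.map_det] at hp
    convert hp using 2
    ext i j
    simp

variable {k : ℕ} {d : ℕ} {m : Fin k → ℕ}

instance (m : ℕ) : Finite {ν : Fin 3 → ℕ // ν 0 + ν 1 + ν 2 < m} :=
  ((Set.finite_Iic fun _ => m).subset fun ν (hν : ν 0 + ν 1 + ν 2 < m) i => by
    fin_cases i <;> simp <;> omega).to_subtype

theorem generically_finrank_linSys_le (p₀ : Fin k → Fin 3 → ℂ) (d : ℕ) (m : Fin k → ℕ) :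
    Generically k fun p => Module.finrank ℂ (linSys p d m) ≤ Module.finrank ℂ (linSys p₀ d m) := by
  let A : homogeneousSubmodule (Fin 3) ℂ d →ₗ[ℂ]
      (Σ i, {ν : Fin 3 → ℕ // ν 0 + ν 1 + ν 2 < m i}) → MvPolynomial (Fin k × Fin 3) ℂ :=
    LinearMap.pi fun t =>
      (rename (Prod.mk t.1)).toLinearMap ∘ₗ mderiv t.2 ∘ₗ (homogeneousSubmodule (Fin 3) ℂ d).subtype
  have hker (p : Fin k → Fin 3 → ℂ) :
      LinearMap.ker ((aeval fun x : Fin k × Fin 3 => p x.1 x.2).toLinearMap.compLeft _ ∘ₗ A) =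
        (linSys p d m).comap (homogeneousSubmodule (Fin 3) ℂ d).subtype := by
    ext f
    rw [Submodule.mem_comap, Submodule.subtype_apply, mem_linSys_iff_mderiv,
      and_iff_right (show IsHomogeneous f.1 d from f.2), LinearMap.mem_ker, funext_iff,
      Sigma.forall]
    simp only [Subtype.forall]
    refine forall₃_congr fun i ν hν => ?_
    simp [A, aeval_eq_eval, eval_rename_prodMk]
  have hfinrank (p : Fin k → Fin 3 → ℂ) :=
    (Submodule.comapSubtypeEquivOfLe (linSys_le p d m)).finrank_eq
  obtain ⟨P, hP, hle⟩ := exists_eval_ne_zero_finrank_ker_le A fun x => p₀ x.1 x.2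
  refine ⟨P, fun h => hP (by rw [h, map_zero]), fun p _ hp => ?_⟩
  beta_reduce
  rw [← hfinrank p, ← hfinrank p₀, ← hker p, ← hker p₀]
  exact hle _ hp

/-- The vector space dimension of `linSys p d m` for points `p` in general position, which by
semicontinuity is the smallest one. -/
noncomputable def genericDim (d : ℕ) (m : Fin k → ℕ) : ℕ :=
  ⨅ p : Fin k → Fin 3 → ℂ, Module.finrank ℂ (linSys p d m)

theorem genericDim_le_finrank (p : Fin k → Fin 3 → ℂ) (d : ℕ) (m : Fin k → ℕ) :
    genericDim d m ≤ Module.finrank ℂ (linSys p d m) :=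
  ciInf_le' _ p

theorem generically_finrank_eq_genericDim (d : ℕ) (m : Fin k → ℕ) :
    Generically k fun p => Module.finrank ℂ (linSys p d m) = genericDim d m := by
  obtain ⟨p₀, hp₀⟩ := ciInf_mem fun p : Fin k → Fin 3 → ℂ => Module.finrank ℂ (linSys p d m)
  exact (generically_finrank_linSys_le p₀ d m).mono fun p hp =>
    (hp.trans_eq hp₀).antisymm (genericDim_le_finrank p d m)

end Generic

section Cremona

variable {k : ℕ} {b : Fin 3 → Fin k} {p : Fin k → Fin 3 → ℂ}

/-- The points `p (b 0)`, `p (b 1)`, `p (b 2)` are the three coordinate points, and no other point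
of `p` lies on a coordinate line. In this position the pointwise inverse `p⁻¹` is the image of `p`
under the standard Cremona transformation, the convention `0⁻¹ = 0` fixing the coordinate points. -/
def IsStandard (b : Fin 3 → Fin k) (p : Fin k → Fin 3 → ℂ) : Prop :=
  (∀ t, p (b t) = Pi.single t 1) ∧ ∀ j ∉ Set.range b, ∀ t, p j t ≠ 0

theorem IsStandard.inv (hp : IsStandard b p) : IsStandard b p⁻¹ := by
  refine ⟨fun t => ?_, fun j hj t => inv_ne_zero (hp.2 j hj t)⟩
  ext s
  simp [hp.1, Pi.single_apply, apply_ite]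

theorem injective_update {α β : Type*} [DecidableEq α] {g : α → β} {y : β} (hg : g.Injective)
    (hy : y ∉ Set.range g) (a : α) : (Function.update g a y).Injective := by
  intro x x' h
  by_cases hx : x = a <;> by_cases hx' : x' = a
  · rw [hx, hx']
  · rw [hx, Function.update_self, Function.update_of_ne hx'] at h
    exact (hy ⟨x', h.symm⟩).elim
  · rw [hx', Function.update_self, Function.update_of_ne hx] at h
    exact (hy ⟨x, h⟩).elim
  · rw [Function.update_of_ne hx, Function.update_of_ne hx'] at h
    exact hg h

theorem exists_isStandard_mulVec (hb : b.Injective)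
    (hp : ∀ c : Fin 3 → Fin k, c.Injective → (Matrix.of (p ∘ c)).det ≠ 0) :
    ∃ M : Matrix (Fin 3) (Fin 3) ℂ, M.det ≠ 0 ∧ IsStandard b fun i => M *ᵥ p i := by
  let B : Matrix (Fin 3) (Fin 3) ℂ := Matrix.of (p ∘ b)
  have hB : IsUnit Bᵀ.det := by
    rw [Matrix.det_transpose]
    exact (hp b hb).isUnit
  refine ⟨Bᵀ⁻¹, (Matrix.isUnit_nonsing_inv_det _ hB).ne_zero, fun t => ?_, fun j hj t => ?_⟩
  · have hcol : p (b t) = Bᵀ *ᵥ Pi.single t 1 := by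
      rw [Matrix.mulVec_single_one]
      rfl
    simp only [hcol, Matrix.mulVec_mulVec, Bᵀ.nonsing_inv_mul hB, Matrix.one_mulVec]
  · have hrow : B.updateRow t (p j) = Matrix.of (p ∘ Function.update b t j) := by
      rw [Function.comp_update]
      rfl
    beta_reduce
    rw [Matrix.inv_def, Matrix.smul_mulVec, Pi.smul_apply, ← Matrix.cramer_eq_adjugate_mulVec,
      Matrix.cramer_transpose_apply, hrow]
    refine smul_ne_zero ?_ (hp _ (injective_update hb hj t))
    rw [Ring.inverse_eq_inv']
    exact inv_ne_zero hB.ne_zero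

theorem exists_isStandard_finrank_eq_genericDim (hb : b.Injective) (d : ℕ) (m : Fin k → ℕ) :
    ∃ p, IsStandard b p ∧ Module.finrank ℂ (linSys p d m) = genericDim d m := by
  have hgeneral := Generically.forall_finite fun c : {c : Fin 3 → Fin k // c.Injective} =>
    generically_det_ne_zero c.2
  obtain ⟨p, hfinrank, hdet⟩ := ((generically_finrank_eq_genericDim d m).and hgeneral).exists_of
  obtain ⟨M, hM, hstd⟩ := exists_isStandard_mulVec hb fun c hc => hdet ⟨c, hc⟩
  exact ⟨_, hstd, (finrank_linSys_mulVec p hM).trans hfinrank⟩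

theorem vanishesTo_single_one_tsub_iff {σ R : Type*} [CommSemiring R] [NoZeroDivisors R]
    [CharZero R] [Finite σ] [DecidableEq σ] {f : MvPolynomial σ R} {d : ℕ}
    (hf : f.IsHomogeneous d) (n : ℕ) (t : σ) :
    VanishesTo (Pi.single t 1) (d - n) f ↔ ∀ a ∈ f.support, a t ≤ n := by
  rw [vanishesTo_single_one_iff hf]
  refine forall₂_congr fun a ha => ?_
  have hle := Finsupp.le_degree t a
  rw [degree_eq_of_mem_support hf ha] at hle
  omega

/-- The numerical types `(d; m)` and `(d'; m')` are exchanged by the quadratic Cremona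
transformation based at the points `b 0`, `b 1`, `b 2`. A form of degree `d` with multiplicity at
least `d - n t` at the coordinate point `t` is one of degree at most `n t` in the variable `t`, and
`reflect n` maps it to a form of degree `d' = ∑ n - d` with the same property. With
`n t = d - m (b t)` this is the usual rule `d' = 2 d - ∑ t, m (b t)`,
`m' (b t) = m (b t) + (d' - d)`, except that negative multiplicities are truncated to `0`. -/
structure IsCremonaPair (b : Fin 3 → Fin k) (n : Fin 3 → ℕ) (d : ℕ) (m : Fin k → ℕ) (d' : ℕ)
    (m' : Fin k → ℕ) : Prop where
  injective : b.Injective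
  degree_add : d + d' = ∑ t, n t
  left_apply : ∀ t, m (b t) = d - n t
  right_apply : ∀ t, m' (b t) = d' - n t
  apply_eq : ∀ j ∉ Set.range b, m j = m' j

namespace IsCremonaPair

variable {n : Fin 3 → ℕ} {d d' : ℕ} {m m' : Fin k → ℕ} {f : MvPolynomial (Fin 3) ℂ}

theorem symm (h : IsCremonaPair b n d m d' m') : IsCremonaPair b n d' m' d m where
  injective := h.injective
  degree_add := (add_comm d' d).trans h.degree_add
  left_apply := h.right_apply
  right_apply := h.left_apply
  apply_eq j hj := (h.apply_eq j hj).symm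

theorem le_of_mem_support (h : IsCremonaPair b n d m d' m') (hp : IsStandard b p)
    (hf : f ∈ linSys p d m) : ∀ a ∈ f.support, a ≤ Finsupp.equivFunOnFinite.symm n := by
  intro a ha t
  obtain ⟨hhom, hvan⟩ := mem_linSys.1 hf
  have ht := hvan (b t)
  rw [hp.1, h.left_apply, vanishesTo_single_one_tsub_iff hhom] at ht
  exact ht a ha

theorem reflect_mem_linSys (h : IsCremonaPair b n d m d' m') (hp : IsStandard b p)
    (hf : f ∈ linSys p d m) : reflect (Finsupp.equivFunOnFinite.symm n) f ∈ linSys p⁻¹ d' m' := by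
  have hsupp := h.le_of_mem_support hp hf
  obtain ⟨hhom, hvan⟩ := mem_linSys.1 hf
  have hdeg : d + d' = (Finsupp.equivFunOnFinite.symm n).degree := by
    rw [Finsupp.degree_eq_sum]
    exact h.degree_add
  have hhom' := isHomogeneous_reflect hhom hdeg hsupp
  refine mem_linSys.2 ⟨hhom', fun j => ?_⟩
  by_cases hj : j ∈ Set.range b
  · obtain ⟨t, rfl⟩ := hj
    rw [hp.inv.1, h.right_apply, vanishesTo_single_one_tsub_iff hhom']
    intro a ha
    obtain ⟨c, -, rfl⟩ := exists_mem_support_of_mem_support_reflect ha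
    exact Nat.sub_le _ _
  · rw [← h.apply_eq j hj]
    refine VanishesTo.reflect (fun t => inv_ne_zero (hp.2 j hj t)) hhom hsupp ?_
    rw [Pi.inv_apply, inv_inv]
    exact hvan j

theorem finrank_linSys_le (h : IsCremonaPair b n d m d' m') (hp : IsStandard b p) :
    Module.finrank ℂ (linSys p d m) ≤ Module.finrank ℂ (linSys p⁻¹ d' m') := by
  refine finrank_linSys_le_of_injOn_of_mapsTo _ ?_ fun f hf => h.reflect_mem_linSys hp hf
  exact Set.LeftInvOn.injOn fun f hf => reflect_reflect (h.le_of_mem_support hp hf)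

theorem genericDim_le (h : IsCremonaPair b n d m d' m') : genericDim d m ≤ genericDim d' m' := by
  obtain ⟨p, hp, hfinrank⟩ := exists_isStandard_finrank_eq_genericDim h.injective d' m'
  calc genericDim d m ≤ Module.finrank ℂ (linSys p⁻¹ d m) := genericDim_le_finrank _ d m
    _ ≤ Module.finrank ℂ (linSys p⁻¹⁻¹ d' m') := h.finrank_linSys_le hp.inv
    _ = genericDim d' m' := by rw [inv_inv, hfinrank]

theorem genericDim_eq (h : IsCremonaPair b n d m d' m') : genericDim d m = genericDim d' m' :=
  h.genericDim_le.antisymm h.symm.genericDim_le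

end IsCremonaPair

theorem linSys_eq_restrictSupport {d : ℕ} {m : Fin k → ℕ} (hp : IsStandard b p)
    (hm : ∀ j ∉ Set.range b, m j = 0) :
    linSys p d m = restrictSupport ℂ {a | a.degree = d ∧ ∀ t, a t + m (b t) ≤ d} := by
  ext f
  rw [mem_linSys, mem_restrictSupport_iff]
  constructor
  · rintro ⟨hhom, hvan⟩ a ha
    refine ⟨degree_eq_of_mem_support hhom ha, fun t => ?_⟩
    have ht := hvan (b t)
    rw [hp.1, vanishesTo_single_one_iff hhom] at ht
    exact ht a ha
  · intro hf
    have hhom : f.IsHomogeneous d := by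
      rw [f.as_sum]
      exact IsHomogeneous.sum _ _ _ fun a ha => isHomogeneous_monomial _ (hf ha).1
    refine ⟨hhom, fun j => ?_⟩
    by_cases hj : j ∈ Set.range b
    · obtain ⟨t, rfl⟩ := hj
      rw [hp.1, vanishesTo_single_one_iff hhom]
      exact fun a ha => (hf ha).2 t
    · rw [hm j hj]
      trivial

theorem genericDim_eq_card {d : ℕ} {m : Fin k → ℕ} (hb : b.Injective)
    (hm : ∀ j ∉ Set.range b, m j = 0) :
    genericDim d m = {a ∈ Finset.Nat.antidiagonalTuple 3 d | ∀ t, a t + m (b t) ≤ d}.card := by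
  obtain ⟨p, hp, hfinrank⟩ := exists_isStandard_finrank_eq_genericDim hb d m
  let e : {a : Fin 3 →₀ ℕ | a.degree = d ∧ ∀ t, a t + m (b t) ≤ d} ≃
      {a // a ∈ {a ∈ Finset.Nat.antidiagonalTuple 3 d | ∀ t, a t + m (b t) ≤ d}} :=
    Finsupp.equivFunOnFinite.subtypeEquiv fun a => by
      simp [Finset.Nat.mem_antidiagonalTuple, Finsupp.degree_eq_sum]
  rw [← hfinrank, linSys_eq_restrictSupport hp hm,
    Module.finrank_eq_nat_card_basis (basisRestrictSupport ℂ _), Nat.card_congr e,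
    Nat.card_eq_fintype_card, Fintype.card_coe]

end Cremona

section Reductions

theorem genericDim_ten_qh : genericDim 10 (qh 3 2) = 3 := by
  have h : IsCremonaPair ![1, 2, 3] ![4, 4, 4] 10 (qh 3 2) 2 ![2, 0, 0, 0] := by
    constructor <;> decide
  rw [h.genericDim_eq, genericDim_eq_card (b := ![0, 1, 2])] <;> decide

theorem genericDim_twentyFour_qh : genericDim 24 (qh 9 16) = 1 := by
  have h₁ : IsCremonaPair ![0, 1, 2] ![8, 18, 18] 24 (qh 9 16)
      20 ![12, 2, 2, 6, 6, 6, 6, 6, 6, 6] := by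
    constructor <;> decide
  have h₂ : IsCremonaPair ![0, 3, 4] ![8, 14, 14] 20 ![12, 2, 2, 6, 6, 6, 6, 6, 6, 6]
      16 ![8, 2, 2, 2, 2, 6, 6, 6, 6, 6] := by
    constructor <;> decide
  have h₃ : IsCremonaPair ![0, 5, 6] ![8, 10, 10] 16 ![8, 2, 2, 2, 2, 6, 6, 6, 6, 6]
      12 ![4, 2, 2, 2, 2, 2, 2, 6, 6, 6] := by
    constructor <;> decide
  have h₄ : IsCremonaPair ![7, 8, 9] ![6, 6, 6] 12 ![4, 2, 2, 2, 2, 2, 2, 6, 6, 6]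
      6 ![4, 2, 2, 2, 2, 2, 2, 0, 0, 0] := by
    constructor <;> decide
  have h₅ : IsCremonaPair ![0, 1, 2] ![2, 4, 4] 6 ![4, 2, 2, 2, 2, 2, 2, 0, 0, 0]
      4 ![2, 0, 0, 2, 2, 2, 2, 0, 0, 0] := by
    constructor <;> decide
  have h₆ : IsCremonaPair ![0, 3, 4] ![2, 2, 2] 4 ![2, 0, 0, 2, 2, 2, 2, 0, 0, 0]
      2 ![0, 0, 0, 0, 0, 2, 2, 0, 0, 0] := by
    constructor <;> decide
  rw [h₁.genericDim_eq, h₂.genericDim_eq, h₃.genericDim_eq, h₄.genericDim_eq, h₅.genericDim_eq,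
    h₆.genericDim_eq, genericDim_eq_card (b := ![5, 6, 7])] <;> decide

end Reductions

theorem special_L_10_2_and_24_16 :
    virtDim 10 (qh 3 2) = -1 ∧
    virtDim 24 (qh 9 16) = -1 ∧
    Generically 4 (fun p =>
      projDim p 10 (qh 3 2) = 2 ∧
      projDim p 10 (qh 3 2) > max (-1) (virtDim 10 (qh 3 2))) ∧
    Generically 10 (fun p =>
      projDim p 24 (qh 9 16) = 0 ∧
      projDim p 24 (qh 9 16) > max (-1) (virtDim 24 (qh 9 16))) := by
  have hv₁ : virtDim 10 (qh 3 2) = -1 := by decide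
  have hv₂ : virtDim 24 (qh 9 16) = -1 := by decide
  refine ⟨hv₁, hv₂, ?_, ?_⟩
  · refine (generically_finrank_eq_genericDim 10 (qh 3 2)).mono fun p hp => ?_
    simp [projDim, hp, genericDim_ten_qh, hv₁]
  · refine (generically_finrank_eq_genericDim 24 (qh 9 16)).mono fun p hp => ?_
    simp [projDim, hp, genericDim_twentyFour_qh, hv₂]
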